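/- Closed differential inequality with the fourth-order dissipation rate (the inequality preceding (pf:ene-low-10) in the proof of Lemma 3.2): let β ≥ 1, δ = μ̲/(16β²) with μ̲ = min{μ,1}, and let ξ ≠ 0 satisfy |ξ| ≤ 2β/ε. Then every solution (â, û) of the Fourier-transformed linearized system with forcing (f̂, ĝ) satisfies, for all t ≥ 0, (1/2)·d/dt V(t)² + (δ/3)·κ·V(t)² ≤ 4·√(Ω²ε² + |ξ|²)·|(f̂(t), ĝ(t))|·V(t), where V(t) is the nonnegative square root of V(t)² = (Ω²ε² + |ξ|²)·|(â(t), û(t))|² + 2δ|ξ|²·Re⟨iε â(t) ξ, û(t)⟩ and κ = |ξ|⁴/(Ω²ε² + |ξ|²). -/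

import Mathlib

noncomputable section
open scoped BigOperators

/-- Hermitian inner product on `ℂ³`: `⟨v,w⟩ = ∑ₖ vₖ · conj(wₖ)`. -/
def hinner (v w : Fin 3 → ℂ) : ℂ := ∑ k, v k * (starRingEnd ℂ) (w k)

/-- Squared norm `‖w‖² = ∑ₖ |wₖ|²` on `ℂ³`. -/
def vnormSq (w : Fin 3 → ℂ) : ℝ := ∑ k, ‖w k‖ ^ 2

/-- Norm `‖w‖` on `ℂ³`. -/
def vnorm (w : Fin 3 → ℂ) : ℝ := Real.sqrt (vnormSq w)

/-- `|(z,w)| = √(|z|² + ‖w‖²)` for `z ∈ ℂ`, `w ∈ ℂ³`. -/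
def pairNorm (z : ℂ) (w : Fin 3 → ℂ) : ℝ := Real.sqrt (‖z‖ ^ 2 + vnormSq w)

/-- Cross product with `e₃ = (0,0,1)`: `e₃ × w = (−w₂, w₁, 0)`. -/
def cross3 (w : Fin 3 → ℂ) : Fin 3 → ℂ := ![-(w 1), w 0, 0]

/-- `|ξ|² = ∑ₖ ξₖ²` for `ξ ∈ ℝ³`. -/
def xiNormSq (ξ : Fin 3 → ℝ) : ℝ := ∑ k, (ξ k) ^ 2

/-- Euclidean norm `|ξ|` for `ξ ∈ ℝ³`. -/
def xiNorm (ξ : Fin 3 → ℝ) : ℝ := Real.sqrt (xiNormSq ξ)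

/-- `ξ·w = ∑ₖ ξₖ wₖ` for `ξ ∈ ℝ³` regarded in `ℂ³` and `w ∈ ℂ³`. -/
def xiDot (ξ : Fin 3 → ℝ) (w : Fin 3 → ℂ) : ℂ := ∑ k, (ξ k : ℂ) * w k

/-- The Fourier-transformed linearized compressible Navier–Stokes–Coriolis system
at time `t` with data `(â, û)`, derivatives `(â', û')` and forcing `(f̂, ĝ)`:
`â′ + (i/ε)(ξ·û) = f̂` and
`û′ + μ|ξ|²û + (μ+μ′)(ξ·û)ξ + Ω(e₃ × û) + (i/ε)âξ = ĝ`. -/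
def SystemAt (μ μ' ε Ω : ℝ) (ξ : Fin 3 → ℝ)
    (a a' : ℝ → ℂ) (u u' : ℝ → Fin 3 → ℂ)
    (f : ℝ → ℂ) (g : ℝ → Fin 3 → ℂ) (t : ℝ) : Prop :=
  (a' t + (Complex.I / (ε : ℂ)) * xiDot ξ (u t) = f t) ∧
  (∀ k, u' t k + ((μ * xiNormSq ξ : ℝ) : ℂ) * u t k
      + (((μ + μ') : ℝ) : ℂ) * xiDot ξ (u t) * (ξ k : ℂ)
      + ((Ω : ℝ) : ℂ) * cross3 (u t) k
      + (Complex.I / (ε : ℂ)) * a t * (ξ k : ℂ) = g t k)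

/-- `κ(|ξ|, Ωε) = |ξ|⁴/(Ω²ε² + |ξ|²)`. -/
def kappa (Ω ε : ℝ) (ξ : Fin 3 → ℝ) : ℝ :=
  xiNorm ξ ^ 4 / (Ω ^ 2 * ε ^ 2 + xiNorm ξ ^ 2)

/-!
The energy `B (|a|² + ‖u‖²)`, with weight `B = Ω²ε² + |ξ|²`, dissipates the velocity only. Adding
the small cross term `2δ|ξ|² Re⟨iεaξ, u⟩` makes the pressure gradient produce the missing damping
`-δ|ξ|⁴|a|²` of the density. Every other contribution of the cross term is absorbed by this damping
and by the viscous dissipation `16β²δ B |ξ|²‖u‖²`: the viscous one because `ε|ξ| ≤ 2β`, and the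
Coriolis one, of size `δ|ξ|² · |Ω|ε|ξ||a|‖u‖`, because `B` contains `Ω²ε²`. The cross term changes
the energy itself by at most the factor `1/8`, so that `V²` is comparable with `B (|a|² + ‖u‖²)` and
the dissipation controls `κ V²`.
-/

lemma mul_add_mul_le_sqrt_mul_sqrt (x y z w : ℝ) :
    x * z + y * w ≤ √(x ^ 2 + y ^ 2) * √(z ^ 2 + w ^ 2) := by
  simpa using Real.sum_mul_le_sqrt_mul_sqrt Finset.univ ![x, y] ![z, w]

section ModifiedEnergy

open Complex (I)
open scoped InnerProductSpace

variable {E : Type*} [NormedAddCommGroup E]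

/-- The weight `Ω²ε² + |ξ|²` of the energy. -/
def energyWeight (Ω ε : ℝ) (ξ : E) : ℝ := Ω ^ 2 * ε ^ 2 + ‖ξ‖ ^ 2

lemma sq_norm_le_energyWeight (Ω ε : ℝ) (ξ : E) : ‖ξ‖ ^ 2 ≤ energyWeight Ω ε ξ :=
  le_add_of_nonneg_left (by positivity)

lemma energyWeight_nonneg (Ω ε : ℝ) (ξ : E) : 0 ≤ energyWeight Ω ε ξ :=
  (sq_nonneg _).trans (sq_norm_le_energyWeight Ω ε ξ)

lemma energyWeight_pos (Ω ε : ℝ) {ξ : E} (hξ : ξ ≠ 0) : 0 < energyWeight Ω ε ξ :=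
  (pow_pos (norm_pos_iff.2 hξ) 2).trans_le (sq_norm_le_energyWeight Ω ε ξ)

variable [InnerProductSpace ℂ E]

/-- The linearized Navier–Stokes–Coriolis system at one instant, over a complex inner product
space: `ξ·w` becomes `⟪ξ, w⟫_ℂ` and `e₃ × w` becomes `J w` for a map `J`. Here `a'` and `u'` are
the values of the time derivatives. -/
structure CoriolisSystem (μ μ' ε Ω : ℝ) (J : E → E) (ξ : E) (a a' f : ℂ) (u u' g : E) :
    Prop where
  density : a' + I / (ε : ℂ) * ⟪ξ, u⟫_ℂ = f
  momentum : u' + ((μ * ‖ξ‖ ^ 2 : ℝ) : ℂ) • u + (((μ + μ' : ℝ) : ℂ) * ⟪ξ, u⟫_ℂ) • ξ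
    + (Ω : ℂ) • J u + (I / (ε : ℂ) * a) • ξ = g

/-- The real bilinear form `Re⟨i a ξ, u⟩` coupling density and velocity, with `⟨·,·⟩` linear in its
first argument as in the paper (so the arguments of Mathlib's `⟪·, ·⟫_ℂ` are exchanged). -/
def coupling (ξ : E) (a : ℂ) (u : E) : ℝ := (⟪u, (I * a) • ξ⟫_ℂ).re

/-- The modified energy `V²`. -/
def modifiedEnergy (Ω ε δ : ℝ) (ξ : E) (a : ℂ) (u : E) : ℝ :=
  energyWeight Ω ε ξ * (‖a‖ ^ 2 + ‖u‖ ^ 2) + 2 * δ * ‖ξ‖ ^ 2 * (ε * coupling ξ a u)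

/-- The symmetric real bilinear form whose quadratic form is `modifiedEnergy`. -/
def energyForm (Ω ε δ : ℝ) (ξ : E) (a : ℂ) (u : E) (b : ℂ) (v : E) : ℝ :=
  energyWeight Ω ε ξ * ((⟪a, b⟫_ℂ).re + (⟪u, v⟫_ℂ).re)
    + δ * ε * ‖ξ‖ ^ 2 * (coupling ξ a v + coupling ξ b u)

/-- The dissipation of `modifiedEnergy` along `CoriolisSystem`: half the rate at which the energy of
an unforced solution decreases. -/
def modifiedDissipation (μ μ' ε Ω δ : ℝ) (J : E → E) (ξ : E) (a : ℂ) (u : E) : ℝ :=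
  energyWeight Ω ε ξ * (μ * ‖ξ‖ ^ 2 * ‖u‖ ^ 2 + (μ + μ') * ‖⟪ξ, u⟫_ℂ‖ ^ 2)
    + δ * ‖ξ‖ ^ 2 * (‖ξ‖ ^ 2 * ‖a‖ ^ 2 - ‖⟪ξ, u⟫_ℂ‖ ^ 2
      + ε * ((2 * μ + μ') * ‖ξ‖ ^ 2 * coupling ξ a u + Ω * coupling ξ a (J u)))

variable {μ μ' ε Ω β δ : ℝ} {J : E → E} {ξ : E} {a a' b f : ℂ} {u u' v g : E}

lemma abs_coupling_le (ξ : E) (a : ℂ) (u : E) : |coupling ξ a u| ≤ ‖ξ‖ * ‖a‖ * ‖u‖ :=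
  calc |coupling ξ a u| ≤ ‖u‖ * ‖(I * a) • ξ‖ :=
        (Complex.abs_re_le_norm _).trans (norm_inner_le_norm _ _)
    _ = ‖ξ‖ * ‖a‖ * ‖u‖ := by rw [norm_smul, norm_mul, Complex.norm_I]; ring

lemma coupling_add_left (ξ : E) (a b : ℂ) (u : E) :
    coupling ξ (a + b) u = coupling ξ a u + coupling ξ b u := by
  simp only [coupling, mul_add, add_smul, inner_add_right, Complex.add_re]

lemma coupling_add_right (ξ : E) (a : ℂ) (u v : E) :
    coupling ξ a (u + v) = coupling ξ a u + coupling ξ a v := by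
  simp only [coupling, inner_add_left, Complex.add_re]

lemma coupling_ofReal_smul_right (ξ : E) (a : ℂ) (r : ℝ) (u : E) :
    coupling ξ a ((r : ℂ) • u) = r * coupling ξ a u := by
  rw [coupling, inner_smul_left, Complex.conj_ofReal, Complex.re_ofReal_mul, coupling]

lemma re_inner_ofReal_mul_inner_smul (r : ℝ) (ξ u : E) :
    (⟪u, ((r : ℂ) * ⟪ξ, u⟫_ℂ) • ξ⟫_ℂ).re = r * ‖⟪ξ, u⟫_ℂ‖ ^ 2 := by
  rw [inner_smul_right, mul_assoc, Complex.re_ofReal_mul, ← inner_conj_symm u ξ, Complex.mul_conj,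
    Complex.ofReal_re, Complex.normSq_eq_norm_sq]

lemma neg_mul_coupling_le (c : ℝ) (ξ : E) (a : ℂ) (u : E) :
    -(c * coupling ξ a u) ≤ ‖ξ‖ ^ 2 * ‖a‖ ^ 2 / 4 + c ^ 2 * ‖u‖ ^ 2 := by
  have h : -(c * coupling ξ a u) ≤ |c| * (‖ξ‖ * ‖a‖ * ‖u‖) := by
    refine (neg_le_abs _).trans ?_
    rw [abs_mul]
    gcongr
    exact abs_coupling_le ξ a u
  rw [← sq_abs c]
  linarith [sq_nonneg (‖ξ‖ * ‖a‖ / 2 - |c| * ‖u‖)]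

lemma energyForm_self (Ω ε δ : ℝ) (ξ : E) (a : ℂ) (u : E) :
    energyForm Ω ε δ ξ a u a u = modifiedEnergy Ω ε δ ξ a u := by
  have ha : (⟪a, a⟫_ℂ).re = ‖a‖ ^ 2 := inner_self_eq_norm_sq (𝕜 := ℂ) a
  have hu : (⟪u, u⟫_ℂ).re = ‖u‖ ^ 2 := inner_self_eq_norm_sq (𝕜 := ℂ) u
  rw [energyForm, modifiedEnergy, ha, hu]
  ring

lemma abs_coupling_part_le (hsmall : |δ * ε| * ‖ξ‖ ≤ 1 / 8) (Ω : ℝ) (a b : ℂ) (u v : E) :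
    |δ * ε * ‖ξ‖ ^ 2 * (coupling ξ a v + coupling ξ b u)|
      ≤ energyWeight Ω ε ξ / 8 * (√(‖a‖ ^ 2 + ‖u‖ ^ 2) * √(‖b‖ ^ 2 + ‖v‖ ^ 2)) :=
  calc |δ * ε * ‖ξ‖ ^ 2 * (coupling ξ a v + coupling ξ b u)|
      = |δ * ε| * ‖ξ‖ ^ 2 * |coupling ξ a v + coupling ξ b u| := by
        rw [abs_mul, abs_mul, abs_of_nonneg (sq_nonneg ‖ξ‖)]
    _ ≤ |δ * ε| * ‖ξ‖ ^ 2 * (‖ξ‖ * ‖a‖ * ‖v‖ + ‖ξ‖ * ‖b‖ * ‖u‖) := by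
        gcongr
        exact (abs_add_le _ _).trans (add_le_add (abs_coupling_le ..) (abs_coupling_le ..))
    _ = |δ * ε| * ‖ξ‖ * ‖ξ‖ ^ 2 * (‖a‖ * ‖v‖ + ‖u‖ * ‖b‖) := by ring
    _ ≤ 1 / 8 * energyWeight Ω ε ξ * (√(‖a‖ ^ 2 + ‖u‖ ^ 2) * √(‖v‖ ^ 2 + ‖b‖ ^ 2)) := by
        have := energyWeight_nonneg Ω ε ξ
        gcongr
        · exact sq_norm_le_energyWeight Ω ε ξ
        · exact mul_add_mul_le_sqrt_mul_sqrt ..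
    _ = energyWeight Ω ε ξ / 8 * (√(‖a‖ ^ 2 + ‖u‖ ^ 2) * √(‖b‖ ^ 2 + ‖v‖ ^ 2)) := by
        rw [add_comm (‖v‖ ^ 2)]; ring

lemma energyForm_le (hsmall : |δ * ε| * ‖ξ‖ ≤ 1 / 8) (Ω : ℝ) (a b : ℂ) (u v : E) :
    energyForm Ω ε δ ξ a u b v
      ≤ 9 / 8 * energyWeight Ω ε ξ * (√(‖a‖ ^ 2 + ‖u‖ ^ 2) * √(‖b‖ ^ 2 + ‖v‖ ^ 2)) := by
  have hinner : (⟪a, b⟫_ℂ).re + (⟪u, v⟫_ℂ).re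
      ≤ √(‖a‖ ^ 2 + ‖u‖ ^ 2) * √(‖b‖ ^ 2 + ‖v‖ ^ 2) :=
    (add_le_add (re_inner_le_norm (𝕜 := ℂ) a b) (re_inner_le_norm (𝕜 := ℂ) u v)).trans
      (mul_add_mul_le_sqrt_mul_sqrt ..)
  have hweighted := mul_le_mul_of_nonneg_left hinner (energyWeight_nonneg Ω ε ξ)
  have hcoupling := (le_abs_self _).trans (abs_coupling_part_le hsmall Ω a b u v)
  rw [energyForm]
  linarith

lemma modifiedEnergy_le (hsmall : |δ * ε| * ‖ξ‖ ≤ 1 / 8) (Ω : ℝ) (a : ℂ) (u : E) :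
    modifiedEnergy Ω ε δ ξ a u ≤ 9 / 8 * energyWeight Ω ε ξ * (‖a‖ ^ 2 + ‖u‖ ^ 2) := by
  have h := energyForm_le hsmall Ω a a u u
  rwa [energyForm_self, Real.mul_self_sqrt (by positivity)] at h

lemma le_modifiedEnergy (hsmall : |δ * ε| * ‖ξ‖ ≤ 1 / 8) (Ω : ℝ) (a : ℂ) (u : E) :
    7 / 8 * energyWeight Ω ε ξ * (‖a‖ ^ 2 + ‖u‖ ^ 2) ≤ modifiedEnergy Ω ε δ ξ a u := by
  have h := (neg_le_abs _).trans (abs_coupling_part_le hsmall Ω a a u u)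
  rw [Real.mul_self_sqrt (by positivity)] at h
  rw [modifiedEnergy]
  linarith

lemma sqrt_energyWeight_mul_sqrt_le (hsmall : |δ * ε| * ‖ξ‖ ≤ 1 / 8) (Ω : ℝ) (a : ℂ) (u : E) :
    √(energyWeight Ω ε ξ) * √(‖a‖ ^ 2 + ‖u‖ ^ 2) ≤ 2 * √(modifiedEnergy Ω ε δ ξ a u) := by
  have hweight := energyWeight_nonneg Ω ε ξ
  have hlower := le_modifiedEnergy hsmall Ω a u
  have hnonneg : 0 ≤ energyWeight Ω ε ξ * (‖a‖ ^ 2 + ‖u‖ ^ 2) := by positivity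
  rw [← Real.sqrt_mul hweight, Real.sqrt_le_left (by positivity), mul_pow, Real.sq_sqrt] <;>
    linarith

lemma energyForm_le_sqrt_modifiedEnergy (hsmall : |δ * ε| * ‖ξ‖ ≤ 1 / 8) (Ω : ℝ) (a b : ℂ)
    (u v : E) :
    energyForm Ω ε δ ξ a u b v
      ≤ 4 * √(energyWeight Ω ε ξ) * √(‖b‖ ^ 2 + ‖v‖ ^ 2) * √(modifiedEnergy Ω ε δ ξ a u) := by
  set W := √(energyWeight Ω ε ξ)
  set X := √(‖a‖ ^ 2 + ‖u‖ ^ 2)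
  set F := √(‖b‖ ^ 2 + ‖v‖ ^ 2)
  set V := √(modifiedEnergy Ω ε δ ξ a u)
  have hW : energyWeight Ω ε ξ = W * W := (Real.mul_self_sqrt (energyWeight_nonneg Ω ε ξ)).symm
  calc energyForm Ω ε δ ξ a u b v
      ≤ 9 / 8 * energyWeight Ω ε ξ * (X * F) := energyForm_le hsmall Ω a b u v
    _ = 9 / 8 * (W * F * (W * X)) := by rw [hW]; ring
    _ ≤ 9 / 8 * (W * F * (2 * V)) := by
        gcongr 9 / 8 * (W * F * ?_)
        exact sqrt_energyWeight_mul_sqrt_le hsmall Ω a u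
    _ ≤ 4 * W * F * V := by
        have : 0 ≤ W * F * V := by positivity
        linarith

lemma norm_inner_sq_le (ξ u : E) : ‖⟪ξ, u⟫_ℂ‖ ^ 2 ≤ ‖ξ‖ ^ 2 * ‖u‖ ^ 2 :=
  (pow_le_pow_left₀ (norm_nonneg _) (norm_inner_le_norm ξ u) 2).trans_eq (mul_pow ..)

lemma min_mul_le_viscous_dissipation (hμ' : 2 * μ + μ' = 1) (ξ u : E) :
    min μ 1 * (‖ξ‖ ^ 2 * ‖u‖ ^ 2) ≤ μ * ‖ξ‖ ^ 2 * ‖u‖ ^ 2 + (μ + μ') * ‖⟪ξ, u⟫_ℂ‖ ^ 2 := by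
  have hd : 0 ≤ ‖⟪ξ, u⟫_ℂ‖ ^ 2 := by positivity
  rw [show μ + μ' = 1 - μ by linarith]
  rcases le_total μ 1 with h | h
  · rw [min_eq_left h]
    linarith [mul_nonneg (sub_nonneg.2 h) hd]
  · rw [min_eq_right h]
    linarith [mul_le_mul_of_nonneg_left (norm_inner_sq_le ξ u) (sub_nonneg.2 h)]

lemma neg_viscous_coupling_le (hξ : |ε| * ‖ξ‖ ≤ 2 * β) (a : ℂ) (u : E) :
    -(ε * ‖ξ‖ ^ 2 * coupling ξ a u)
      ≤ ‖ξ‖ ^ 2 * ‖a‖ ^ 2 / 4 + 4 * β ^ 2 * (‖ξ‖ ^ 2 * ‖u‖ ^ 2) := by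
  have hεξ : (ε * ‖ξ‖) ^ 2 ≤ 4 * β ^ 2 :=
    calc (ε * ‖ξ‖) ^ 2 = (|ε| * ‖ξ‖) ^ 2 := by rw [mul_pow, mul_pow, sq_abs]
      _ ≤ (2 * β) ^ 2 := by gcongr
      _ = 4 * β ^ 2 := by ring
  calc -(ε * ‖ξ‖ ^ 2 * coupling ξ a u)
      ≤ ‖ξ‖ ^ 2 * ‖a‖ ^ 2 / 4 + (ε * ‖ξ‖ ^ 2) ^ 2 * ‖u‖ ^ 2 := neg_mul_coupling_le _ ξ a u
    _ = ‖ξ‖ ^ 2 * ‖a‖ ^ 2 / 4 + (ε * ‖ξ‖) ^ 2 * (‖ξ‖ ^ 2 * ‖u‖ ^ 2) := by ring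
    _ ≤ ‖ξ‖ ^ 2 * ‖a‖ ^ 2 / 4 + 4 * β ^ 2 * (‖ξ‖ ^ 2 * ‖u‖ ^ 2) := by gcongr

lemma neg_rotation_coupling_le (hJ : ‖J u‖ ≤ ‖u‖) (Ω ε : ℝ) (ξ : E) (a : ℂ) :
    -(Ω * ε * coupling ξ a (J u)) ≤ ‖ξ‖ ^ 2 * ‖a‖ ^ 2 / 4 + Ω ^ 2 * ε ^ 2 * ‖u‖ ^ 2 :=
  calc -(Ω * ε * coupling ξ a (J u))
      ≤ ‖ξ‖ ^ 2 * ‖a‖ ^ 2 / 4 + (Ω * ε) ^ 2 * ‖J u‖ ^ 2 := neg_mul_coupling_le _ ξ a (J u)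
    _ ≤ ‖ξ‖ ^ 2 * ‖a‖ ^ 2 / 4 + Ω ^ 2 * ε ^ 2 * ‖u‖ ^ 2 := by rw [mul_pow]; gcongr

lemma le_coupling_dissipation (hJ : ‖J u‖ ≤ ‖u‖) (hβ : 1 ≤ β) (hξ : |ε| * ‖ξ‖ ≤ 2 * β) (Ω : ℝ)
    (a : ℂ) :
    3 / 8 * ‖ξ‖ ^ 2 * (‖a‖ ^ 2 + ‖u‖ ^ 2) - 16 * β ^ 2 * energyWeight Ω ε ξ * ‖u‖ ^ 2
      ≤ ‖ξ‖ ^ 2 * ‖a‖ ^ 2 - ‖⟪ξ, u⟫_ℂ‖ ^ 2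
        + ε * (‖ξ‖ ^ 2 * coupling ξ a u + Ω * coupling ξ a (J u)) := by
  have hviscous := neg_viscous_coupling_le hξ a u
  have hrotation := neg_rotation_coupling_le hJ Ω ε ξ a
  have hdiv := norm_inner_sq_le ξ u
  have hsplit : energyWeight Ω ε ξ * ‖u‖ ^ 2 = Ω ^ 2 * ε ^ 2 * ‖u‖ ^ 2 + ‖ξ‖ ^ 2 * ‖u‖ ^ 2 :=
    add_mul ..
  have hweight : energyWeight Ω ε ξ * ‖u‖ ^ 2 ≤ β ^ 2 * (energyWeight Ω ε ξ * ‖u‖ ^ 2) :=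
    le_mul_of_one_le_left (mul_nonneg (energyWeight_nonneg ..) (sq_nonneg _)) (one_le_pow₀ hβ)
  have hfrequency : β ^ 2 * (‖ξ‖ ^ 2 * ‖u‖ ^ 2) ≤ β ^ 2 * (energyWeight Ω ε ξ * ‖u‖ ^ 2) := by
    gcongr
    exact sq_norm_le_energyWeight Ω ε ξ
  have hξa : 0 ≤ ‖ξ‖ ^ 2 * ‖a‖ ^ 2 := by positivity
  have hξu : 0 ≤ ‖ξ‖ ^ 2 * ‖u‖ ^ 2 := by positivity
  have hΩu : 0 ≤ Ω ^ 2 * ε ^ 2 * ‖u‖ ^ 2 := by positivity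
  linarith

lemma le_modifiedDissipation (hμ' : 2 * μ + μ' = 1) (hJ : ‖J u‖ ≤ ‖u‖) (hβ : 1 ≤ β) (hδ : 0 ≤ δ)
    (hδμ : 16 * β ^ 2 * δ ≤ min μ 1) (hξ : |ε| * ‖ξ‖ ≤ 2 * β) (Ω : ℝ) (a : ℂ) :
    3 / 8 * δ * ‖ξ‖ ^ 4 * (‖a‖ ^ 2 + ‖u‖ ^ 2) ≤ modifiedDissipation μ μ' ε Ω δ J ξ a u := by
  have hviscous : 16 * β ^ 2 * δ * (energyWeight Ω ε ξ * (‖ξ‖ ^ 2 * ‖u‖ ^ 2))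
      ≤ energyWeight Ω ε ξ * (μ * ‖ξ‖ ^ 2 * ‖u‖ ^ 2 + (μ + μ') * ‖⟪ξ, u⟫_ℂ‖ ^ 2) := by
    have hweight := energyWeight_nonneg Ω ε ξ
    calc 16 * β ^ 2 * δ * (energyWeight Ω ε ξ * (‖ξ‖ ^ 2 * ‖u‖ ^ 2))
        ≤ min μ 1 * (energyWeight Ω ε ξ * (‖ξ‖ ^ 2 * ‖u‖ ^ 2)) := by gcongr
      _ = energyWeight Ω ε ξ * (min μ 1 * (‖ξ‖ ^ 2 * ‖u‖ ^ 2)) := by ring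
      _ ≤ _ := by gcongr; exact min_mul_le_viscous_dissipation hμ' ξ u
  have hcoupling := mul_le_mul_of_nonneg_left (le_coupling_dissipation hJ hβ hξ Ω a)
    (mul_nonneg hδ (sq_nonneg ‖ξ‖))
  rw [modifiedDissipation, hμ']
  linarith

lemma rate_mul_modifiedEnergy_le (hsmall : |δ * ε| * ‖ξ‖ ≤ 1 / 8) (hξ0 : ξ ≠ 0) (Ω : ℝ) (a : ℂ)
    (u : E) :
    ‖ξ‖ ^ 4 / energyWeight Ω ε ξ * modifiedEnergy Ω ε δ ξ a u
      ≤ 9 / 8 * ‖ξ‖ ^ 4 * (‖a‖ ^ 2 + ‖u‖ ^ 2) := by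
  have hweight := energyWeight_pos Ω ε hξ0
  calc ‖ξ‖ ^ 4 / energyWeight Ω ε ξ * modifiedEnergy Ω ε δ ξ a u
      ≤ ‖ξ‖ ^ 4 / energyWeight Ω ε ξ * (9 / 8 * energyWeight Ω ε ξ * (‖a‖ ^ 2 + ‖u‖ ^ 2)) := by
        gcongr
        exact modifiedEnergy_le hsmall Ω a u
    _ = 9 / 8 * ‖ξ‖ ^ 4 * (‖a‖ ^ 2 + ‖u‖ ^ 2) := by field_simp

namespace CoriolisSystem

lemma energy_balance (hJ : (⟪u, J u⟫_ℂ).re = 0) (h : CoriolisSystem μ μ' ε Ω J ξ a a' f u u' g) :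
    (⟪a, a'⟫_ℂ).re + (⟪u, u'⟫_ℂ).re
      = (⟪a, f⟫_ℂ).re + (⟪u, g⟫_ℂ).re
        - (μ * ‖ξ‖ ^ 2 * ‖u‖ ^ 2 + (μ + μ') * ‖⟪ξ, u⟫_ℂ‖ ^ 2) := by
  have hpressure : (⟪a, I / (ε : ℂ) * ⟪ξ, u⟫_ℂ⟫_ℂ).re + (⟪u, (I / (ε : ℂ) * a) • ξ⟫_ℂ).re = 0 := by
    have hconj : ⟪a, I / (ε : ℂ) * ⟪ξ, u⟫_ℂ⟫_ℂ = -(starRingEnd ℂ) ⟪u, (I / (ε : ℂ) * a) • ξ⟫_ℂ := by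
      rw [inner_smul_right, map_mul, inner_conj_symm, RCLike.inner_apply, map_mul, map_div₀,
        Complex.conj_I, Complex.conj_ofReal]
      ring
    rw [hconj, Complex.neg_re, Complex.conj_re, neg_add_cancel]
  have hshear : (⟪u, ((μ * ‖ξ‖ ^ 2 : ℝ) : ℂ) • u⟫_ℂ).re = μ * ‖ξ‖ ^ 2 * ‖u‖ ^ 2 := by
    rw [inner_smul_right, Complex.re_ofReal_mul]
    exact congrArg _ (inner_self_eq_norm_sq (𝕜 := ℂ) u)
  have hbulk : (⟪u, (((μ + μ' : ℝ) : ℂ) * ⟪ξ, u⟫_ℂ) • ξ⟫_ℂ).re = (μ + μ') * ‖⟪ξ, u⟫_ℂ‖ ^ 2 := by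
    rw [re_inner_ofReal_mul_inner_smul]
  have hrotation : (⟪u, (Ω : ℂ) • J u⟫_ℂ).re = 0 := by
    rw [inner_smul_right, Complex.re_ofReal_mul, hJ, mul_zero]
  rw [← h.density, ← h.momentum]
  simp only [inner_add_right, Complex.add_re, hshear, hbulk, hrotation]
  linarith

lemma coupling_balance (hε : ε ≠ 0) (h : CoriolisSystem μ μ' ε Ω J ξ a a' f u u' g) :
    ε * (coupling ξ a u' + coupling ξ a' u)
      = ε * (coupling ξ a g + coupling ξ f u)
        - (‖ξ‖ ^ 2 * ‖a‖ ^ 2 - ‖⟪ξ, u⟫_ℂ‖ ^ 2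
          + ε * ((2 * μ + μ') * ‖ξ‖ ^ 2 * coupling ξ a u + Ω * coupling ξ a (J u))) := by
  have hdensity : ε * coupling ξ (I / (ε : ℂ) * ⟪ξ, u⟫_ℂ) u = -‖⟪ξ, u⟫_ℂ‖ ^ 2 := by
    have hI : I * (I / (ε : ℂ) * ⟪ξ, u⟫_ℂ) = ((-ε⁻¹ : ℝ) : ℂ) * ⟪ξ, u⟫_ℂ := by
      push_cast
      linear_combination ⟪ξ, u⟫_ℂ / ε * Complex.I_mul_I
    rw [coupling, hI, re_inner_ofReal_mul_inner_smul]
    field_simp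
  have hbulk : coupling ξ a ((((μ + μ' : ℝ) : ℂ) * ⟪ξ, u⟫_ℂ) • ξ)
      = (μ + μ') * ‖ξ‖ ^ 2 * coupling ξ a u := by
    have hinner : ⟪(((μ + μ' : ℝ) : ℂ) * ⟪ξ, u⟫_ℂ) • ξ, (I * a) • ξ⟫_ℂ
        = (((μ + μ') * ‖ξ‖ ^ 2 : ℝ) : ℂ) * ⟪u, (I * a) • ξ⟫_ℂ := by
      simp only [inner_smul_left, inner_smul_right, inner_self_eq_norm_sq_to_K, map_mul,
        inner_conj_symm, Complex.conj_ofReal, Complex.coe_algebraMap]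
      push_cast
      ring
    rw [coupling, hinner, Complex.re_ofReal_mul, coupling]
  have hpressure : ε * coupling ξ a ((I / (ε : ℂ) * a) • ξ) = ‖ξ‖ ^ 2 * ‖a‖ ^ 2 := by
    have hinner : ⟪(I / (ε : ℂ) * a) • ξ, (I * a) • ξ⟫_ℂ
        = ((ε⁻¹ * (‖ξ‖ ^ 2 * ‖a‖ ^ 2) : ℝ) : ℂ) := by
      rw [inner_smul_left, inner_smul_right, inner_self_eq_norm_sq_to_K, map_mul, map_div₀,
        Complex.conj_I, Complex.conj_ofReal]
      push_cast
      rw [← Complex.conj_mul' a]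
      linear_combination (-(ε : ℂ)⁻¹ * ‖ξ‖ ^ 2 * ((starRingEnd ℂ) a * a)) * Complex.I_mul_I
    rw [coupling, hinner, Complex.ofReal_re, mul_inv_cancel_left₀ hε]
  rw [← h.density, ← h.momentum]
  simp only [coupling_add_left, coupling_add_right, coupling_ofReal_smul_right, hbulk]
  linear_combination -hdensity - hpressure

lemma energyForm_deriv (hε : ε ≠ 0) (hJ : (⟪u, J u⟫_ℂ).re = 0)
    (h : CoriolisSystem μ μ' ε Ω J ξ a a' f u u' g) (δ : ℝ) :
    energyForm Ω ε δ ξ a u a' u'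
      = energyForm Ω ε δ ξ a u f g - modifiedDissipation μ μ' ε Ω δ J ξ a u := by
  rw [energyForm, energyForm, modifiedDissipation, h.energy_balance hJ]
  linear_combination δ * ‖ξ‖ ^ 2 * h.coupling_balance hε

end CoriolisSystem

lemma hasDerivAt_coupling {a : ℝ → ℂ} {u : ℝ → E} {t : ℝ} (ha : HasDerivAt a a' t)
    (hu : HasDerivAt u u' t) (ξ : E) :
    HasDerivAt (fun s => coupling ξ (a s) (u s)) (coupling ξ (a t) u' + coupling ξ a' (u t)) t := by
  have h := hu.inner ℂ ((ha.const_mul I).smul_const ξ)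
  exact (Complex.reCLM.hasFDerivAt.comp_hasDerivAt t h).congr_deriv
    ((Complex.add_re _ _).trans (add_comm _ _))

lemma hasDerivAt_norm_sq {u : ℝ → E} {t : ℝ} (hu : HasDerivAt u u' t) :
    HasDerivAt (fun s => ‖u s‖ ^ 2) (2 * (⟪u t, u'⟫_ℂ).re) t :=
  let _ : InnerProductSpace ℝ E := InnerProductSpace.complexToReal
  hu.norm_sq

lemma hasDerivAt_modifiedEnergy {a : ℝ → ℂ} {u : ℝ → E} {t : ℝ} (ha : HasDerivAt a a' t)
    (hu : HasDerivAt u u' t) (Ω ε δ : ℝ) (ξ : E) :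
    HasDerivAt (fun s => modifiedEnergy Ω ε δ ξ (a s) (u s))
      (2 * energyForm Ω ε δ ξ (a t) (u t) a' u') t := by
  have hnorms :=
    ((hasDerivAt_norm_sq ha).add (hasDerivAt_norm_sq hu)).const_mul (energyWeight Ω ε ξ)
  have hcoupling := ((hasDerivAt_coupling ha hu ξ).const_mul ε).const_mul (2 * δ * ‖ξ‖ ^ 2)
  refine (hnorms.add hcoupling).congr_deriv ?_
  rw [energyForm]
  ring

theorem modified_energy_closed_inequality_general (hμ' : 2 * μ + μ' = 1) (hε : 0 < ε) (hβ : 1 ≤ β)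
    (hδ : 0 ≤ δ) (hδμ : 16 * β ^ 2 * δ ≤ min μ 1) (hJ_skew : ∀ w, (⟪w, J w⟫_ℂ).re = 0)
    (hJ_norm : ∀ w, ‖J w‖ ≤ ‖w‖) (hξ0 : ξ ≠ 0) (hξ : ‖ξ‖ ≤ 2 * β / ε) {a : ℝ → ℂ} {u : ℝ → E}
    {t D : ℝ} (ha : HasDerivAt a a' t) (hu : HasDerivAt u u' t)
    (hsys : CoriolisSystem μ μ' ε Ω J ξ (a t) a' f (u t) u' g)
    (hD : HasDerivAt (fun s => modifiedEnergy Ω ε δ ξ (a s) (u s)) D t) :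
    1 / 2 * D + δ / 3 * (‖ξ‖ ^ 4 / energyWeight Ω ε ξ) * modifiedEnergy Ω ε δ ξ (a t) (u t)
      ≤ 4 * √(energyWeight Ω ε ξ) * √(‖f‖ ^ 2 + ‖g‖ ^ 2)
        * √(modifiedEnergy Ω ε δ ξ (a t) (u t)) := by
  have hεξ : |ε| * ‖ξ‖ ≤ 2 * β := by rwa [abs_of_pos hε, mul_comm, ← le_div_iff₀ hε]
  have hsmall : |δ * ε| * ‖ξ‖ ≤ 1 / 8 :=
    calc |δ * ε| * ‖ξ‖ = δ * (|ε| * ‖ξ‖) := by rw [abs_mul, abs_of_nonneg hδ, mul_assoc]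
      _ ≤ δ * (2 * β ^ 2) := by
        gcongr δ * ?_
        exact hεξ.trans (by gcongr; exact le_self_pow₀ hβ two_ne_zero)
      _ ≤ 1 / 8 := by linarith [min_le_right μ 1]
  have hderiv : 1 / 2 * D = energyForm Ω ε δ ξ (a t) (u t) f g
      - modifiedDissipation μ μ' ε Ω δ J ξ (a t) (u t) := by
    rw [hD.unique (hasDerivAt_modifiedEnergy ha hu Ω ε δ ξ),
      hsys.energyForm_deriv hε.ne' (hJ_skew _)]
    ring
  have hforcing := energyForm_le_sqrt_modifiedEnergy hsmall Ω (a t) f (u t) g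
  have hdissipation := le_modifiedDissipation hμ' (hJ_norm (u t)) hβ hδ hδμ hεξ Ω (a t)
  have hrate := mul_le_mul_of_nonneg_left (rate_mul_modifiedEnergy_le hsmall hξ0 Ω (a t) (u t)) hδ
  linarith

end ModifiedEnergy

section Euclidean

open scoped InnerProductSpace

/-- The frequency `ξ ∈ ℝ³` as an element of the Hermitian space `ℂ³`. -/
def complexFrequency (ξ : Fin 3 → ℝ) : EuclideanSpace ℂ (Fin 3) := WithLp.toLp 2 fun k => (ξ k : ℂ)

/-- `w ↦ e₃ × w` on the Hermitian space `ℂ³`. -/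
def coriolisMap (w : EuclideanSpace ℂ (Fin 3)) : EuclideanSpace ℂ (Fin 3) :=
  WithLp.toLp 2 (cross3 w.ofLp)

lemma vnormSq_eq_norm_sq (w : Fin 3 → ℂ) : vnormSq w = ‖WithLp.toLp 2 w‖ ^ 2 :=
  (EuclideanSpace.norm_sq_eq (WithLp.toLp 2 w)).symm

lemma pairNorm_eq_sqrt (z : ℂ) (w : Fin 3 → ℂ) :
    pairNorm z w = √(‖z‖ ^ 2 + ‖WithLp.toLp 2 w‖ ^ 2) := by
  rw [pairNorm, vnormSq_eq_norm_sq]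

lemma pairNorm_sq (z : ℂ) (w : Fin 3 → ℂ) :
    pairNorm z w ^ 2 = ‖z‖ ^ 2 + ‖WithLp.toLp 2 w‖ ^ 2 := by
  rw [pairNorm_eq_sqrt, Real.sq_sqrt (by positivity)]

lemma xiNormSq_eq_norm_sq (ξ : Fin 3 → ℝ) : xiNormSq ξ = ‖complexFrequency ξ‖ ^ 2 := by
  simp [xiNormSq, complexFrequency, EuclideanSpace.norm_sq_eq]

lemma xiNorm_eq_norm (ξ : Fin 3 → ℝ) : xiNorm ξ = ‖complexFrequency ξ‖ := by
  rw [xiNorm, xiNormSq_eq_norm_sq, Real.sqrt_sq (norm_nonneg _)]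

lemma weight_eq_energyWeight (Ω ε : ℝ) (ξ : Fin 3 → ℝ) :
    Ω ^ 2 * ε ^ 2 + xiNormSq ξ = energyWeight Ω ε (complexFrequency ξ) := by
  rw [xiNormSq_eq_norm_sq, energyWeight]

lemma kappa_eq (Ω ε : ℝ) (ξ : Fin 3 → ℝ) :
    kappa Ω ε ξ = ‖complexFrequency ξ‖ ^ 4 / energyWeight Ω ε (complexFrequency ξ) := by
  rw [kappa, xiNorm_eq_norm, energyWeight]

lemma complexFrequency_ne_zero {ξ : Fin 3 → ℝ} (hξ : ξ ≠ 0) : complexFrequency ξ ≠ 0 := by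
  contrapose! hξ
  funext k
  simpa [complexFrequency] using congrArg (fun w => w.ofLp k) hξ

lemma xiDot_eq_inner (ξ : Fin 3 → ℝ) (w : Fin 3 → ℂ) :
    xiDot ξ w = ⟪complexFrequency ξ, WithLp.toLp 2 w⟫_ℂ := by
  simp [xiDot, complexFrequency, PiLp.inner_apply, mul_comm]

lemma hinner_eq_inner (v w : Fin 3 → ℂ) :
    hinner v w = ⟪WithLp.toLp 2 w, WithLp.toLp 2 v⟫_ℂ := by
  simp [hinner, PiLp.inner_apply]

lemma re_hinner_frequency (ε : ℝ) (ξ : Fin 3 → ℝ) (a : ℂ) (u : Fin 3 → ℂ) :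
    (hinner (fun k => Complex.I * (ε : ℂ) * a * (ξ k : ℂ)) u).re
      = ε * coupling (complexFrequency ξ) a (WithLp.toLp 2 u) := by
  have hscale : WithLp.toLp 2 (fun k => Complex.I * (ε : ℂ) * a * (ξ k : ℂ))
      = (ε : ℂ) • (Complex.I * a) • complexFrequency ξ := by
    ext k
    simp only [complexFrequency, PiLp.smul_apply, smul_eq_mul]
    ring
  rw [hinner_eq_inner, hscale, inner_smul_right, Complex.re_ofReal_mul, coupling]

lemma modifiedEnergy_eq (Ω ε δ : ℝ) (ξ : Fin 3 → ℝ) (a : ℂ) (u : Fin 3 → ℂ) :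
    (Ω ^ 2 * ε ^ 2 + xiNormSq ξ) * pairNorm a u ^ 2
        + 2 * δ * xiNormSq ξ * (hinner (fun k => Complex.I * (ε : ℂ) * a * (ξ k : ℂ)) u).re
      = modifiedEnergy Ω ε δ (complexFrequency ξ) a (WithLp.toLp 2 u) := by
  rw [re_hinner_frequency, pairNorm_sq, weight_eq_energyWeight, xiNormSq_eq_norm_sq, modifiedEnergy]

lemma re_inner_coriolisMap_self (w : EuclideanSpace ℂ (Fin 3)) : (⟪w, coriolisMap w⟫_ℂ).re = 0 := by
  simp only [coriolisMap, cross3, PiLp.inner_apply, RCLike.inner_apply, Fin.sum_univ_three,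
    Matrix.cons_val_zero, Matrix.cons_val_one, Matrix.cons_val, Complex.add_re, Complex.neg_re,
    Complex.mul_re, Complex.neg_im, Complex.conj_re, Complex.conj_im, Complex.zero_re,
    Complex.zero_im]
  ring

lemma norm_coriolisMap_le (w : EuclideanSpace ℂ (Fin 3)) : ‖coriolisMap w‖ ≤ ‖w‖ := by
  refine le_of_sq_le_sq ?_ (norm_nonneg w)
  simp only [coriolisMap, cross3, EuclideanSpace.norm_sq_eq, Fin.sum_univ_three,
    Matrix.cons_val_zero, Matrix.cons_val_one, Matrix.cons_val, norm_neg, norm_zero]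
  linarith [sq_nonneg ‖w.ofLp 2‖]

lemma SystemAt.coriolisSystem {μ μ' ε Ω t : ℝ} {ξ : Fin 3 → ℝ} {a a' f : ℝ → ℂ}
    {u u' g : ℝ → Fin 3 → ℂ} (h : SystemAt μ μ' ε Ω ξ a a' u u' f g t) :
    CoriolisSystem μ μ' ε Ω coriolisMap (complexFrequency ξ) (a t) (a' t) (f t)
      (WithLp.toLp 2 (u t)) (WithLp.toLp 2 (u' t)) (WithLp.toLp 2 (g t)) where
  density := by rw [← xiDot_eq_inner]; exact h.1
  momentum := by
    rw [← xiDot_eq_inner, ← xiNormSq_eq_norm_sq]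
    exact PiLp.ext h.2

lemma hasDerivAt_toLp {u : ℝ → Fin 3 → ℂ} {u' : Fin 3 → ℂ} {t : ℝ} (hu : HasDerivAt u u' t) :
    HasDerivAt (fun s => WithLp.toLp 2 (u s)) (WithLp.toLp 2 u') t :=
  (PiLp.hasFDerivAt_toLp 2 (u t)).comp_hasDerivAt t hu

end Euclidean

/-- Closed differential inequality with the fourth-order dissipation rate (the inequality
preceding (pf:ene-low-10) in the proof of Lemma 3.2): with `δ = μ̲/(16β²)`, `ξ ≠ 0`,
`|ξ| ≤ 2β/ε`, `V = √(V²)` and `κ = |ξ|⁴/(Ω²ε² + |ξ|²)`,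
`(1/2) d/dt V² + (δ/3)κV² ≤ 4√(Ω²ε² + |ξ|²)·|(f̂,ĝ)|·V`. -/
theorem modified_energy_closed_inequality
    (μ μ' ε Ω β : ℝ) (hμ : 0 < μ) (hμ' : 2 * μ + μ' = 1) (hε : 0 < ε) (hβ : 1 ≤ β)
    (δ : ℝ) (hδ : δ = min μ 1 / (16 * β ^ 2))
    (ξ : Fin 3 → ℝ) (hξ0 : ξ ≠ 0) (hξ : xiNorm ξ ≤ 2 * β / ε)
    (a a' f : ℝ → ℂ) (u u' g : ℝ → Fin 3 → ℂ)
    (ha : ∀ t : ℝ, 0 ≤ t → HasDerivAt a (a' t) t)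
    (hu : ∀ t : ℝ, 0 ≤ t → HasDerivAt u (u' t) t)
    (hf : ContinuousOn f (Set.Ici 0))
    (hg : ContinuousOn g (Set.Ici 0))
    (hsys : ∀ t : ℝ, 0 ≤ t → SystemAt μ μ' ε Ω ξ a a' u u' f g t) :
    ∀ t : ℝ, 0 ≤ t → ∀ D : ℝ,
      HasDerivAt
        (fun s => (Ω ^ 2 * ε ^ 2 + xiNormSq ξ) * pairNorm (a s) (u s) ^ 2
          + 2 * δ * xiNormSq ξ
              * (hinner (fun k => Complex.I * (ε : ℂ) * a s * (ξ k : ℂ)) (u s)).re) D t →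
      (1 / 2) * D
          + (δ / 3) * kappa Ω ε ξ
              * ((Ω ^ 2 * ε ^ 2 + xiNormSq ξ) * pairNorm (a t) (u t) ^ 2
                + 2 * δ * xiNormSq ξ
                    * (hinner (fun k => Complex.I * (ε : ℂ) * a t * (ξ k : ℂ)) (u t)).re)
        ≤ 4 * Real.sqrt (Ω ^ 2 * ε ^ 2 + xiNormSq ξ) * pairNorm (f t) (g t)
            * Real.sqrt ((Ω ^ 2 * ε ^ 2 + xiNormSq ξ) * pairNorm (a t) (u t) ^ 2
                + 2 * δ * xiNormSq ξ
                    * (hinner (fun k => Complex.I * (ε : ℂ) * a t * (ξ k : ℂ)) (u t)).re) := by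
  intro t ht D hD
  simp only [modifiedEnergy_eq] at hD ⊢
  rw [kappa_eq, pairNorm_eq_sqrt, weight_eq_energyWeight]
  have hβ2 : 16 * β ^ 2 ≠ 0 := by positivity
  exact modified_energy_closed_inequality_general (a := a) (u := fun s => WithLp.toLp 2 (u s))
    (t := t) hμ' hε hβ (by rw [hδ]; positivity) (by rw [hδ, mul_div_cancel₀ _ hβ2])
    re_inner_coriolisMap_self norm_coriolisMap_le (complexFrequency_ne_zero hξ0)
    (xiNorm_eq_norm ξ ▸ hξ) (ha t ht) (hasDerivAt_toLp (hu t ht)) (hsys t ht).coriolisSystem hD
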